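/- Let the notation be as in the context, with two splicing data (superscripts 1 and 2) and the splicing map D. Suppose that in the second datum: B0^2 is injective, Binf^2 is surjective, rank(B1^2) = a1^2, a0^2 = a1^2 + 1, a1^2 < ainf^2, and the composite Binf^2 B1^2 is surjective. Then dim coker(D) ≥ dim coker(X1^1 Binf^1) · dim coker(X1^2). If moreover the composite B1^2 B0^2 is injective, then dim ker(D) ≥ dim ker(B0^1 X1^1) · dim ker(X1^2). -/

import Mathlib

set_option maxHeartbeats 1600000

open Matrix Module
open scoped Kronecker

abbrev F2 : Type := ZMod 2

/-- A splicing datum: the algebraic data extracted from the knot Floer homology of a knot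
in a homology sphere, as in Eftekhary's splicing formula. -/
structure SplicingDatum where
  a0 : ℕ
  a1 : ℕ
  ainf : ℕ
  A0 : Matrix (Fin ainf) (Fin ainf) F2
  B0 : Matrix (Fin ainf) (Fin a1) F2
  C0 : Matrix (Fin a1) (Fin ainf) F2
  D0 : Matrix (Fin a1) (Fin a1) F2
  A1 : Matrix (Fin a0) (Fin a0) F2
  B1 : Matrix (Fin a0) (Fin ainf) F2
  C1 : Matrix (Fin ainf) (Fin a0) F2
  D1 : Matrix (Fin ainf) (Fin ainf) F2
  Ainf : Matrix (Fin a1) (Fin a1) F2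
  Binf : Matrix (Fin a1) (Fin a0) F2
  Cinf : Matrix (Fin a0) (Fin a1) F2
  Dinf : Matrix (Fin a0) (Fin a0) F2
  C0inv : Matrix (Fin a1) (Fin ainf) F2
  C1inv : Matrix (Fin ainf) (Fin a0) F2
  Cinfinv : Matrix (Fin a0) (Fin a1) F2
  inv0_left : Matrix.fromBlocks A0 B0 C0 D0 * Matrix.fromBlocks A0 B0 C0inv D0 = 1
  inv0_right : Matrix.fromBlocks A0 B0 C0inv D0 * Matrix.fromBlocks A0 B0 C0 D0 = 1
  inv1_left : Matrix.fromBlocks A1 B1 C1 D1 * Matrix.fromBlocks A1 B1 C1inv D1 = 1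
  inv1_right : Matrix.fromBlocks A1 B1 C1inv D1 * Matrix.fromBlocks A1 B1 C1 D1 = 1
  invinf_left : Matrix.fromBlocks Ainf Binf Cinf Dinf * Matrix.fromBlocks Ainf Binf Cinfinv Dinf = 1
  invinf_right : Matrix.fromBlocks Ainf Binf Cinfinv Dinf * Matrix.fromBlocks Ainf Binf Cinf Dinf = 1
  comm0 : A0 * B0 + B0 * D0 = 0
  comm1 : A1 * B1 + B1 * D1 = 0
  comminf : Ainf * Binf + Binf * Dinf = 0
  sq0 : B1 * B0 * Binf * (B1 * B0 * Binf) = 0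
  sq1 : Binf * B1 * B0 * (Binf * B1 * B0) = 0
  sqinf : B0 * Binf * B1 * (B0 * Binf * B1) = 0

/-- dimension of the kernel of the linear map induced by a matrix -/
noncomputable def kdim {m n : Type*} [Fintype n] (M : Matrix m n F2) : ℕ :=
  finrank F2 ↥(LinearMap.ker M.mulVecLin)

/-- dimension of the cokernel of the linear map induced by a matrix -/
noncomputable def cdim {m n : Type*} [Fintype n] (M : Matrix m n F2) : ℕ :=
  finrank F2 ((m → F2) ⧸ LinearMap.range M.mulVecLin)

/-- tensor product of two vectors, as a vector indexed by the product type -/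
def tensVec {m n : Type*} (x : m → F2) (y : n → F2) : m × n → F2 :=
  fun p => x p.1 * y p.2

namespace SplicingDatum

variable (d : SplicingDatum)

def X0M : Matrix (Fin d.a0) (Fin d.a0) F2 := d.B1 * d.B0 * d.Binf
def X1M : Matrix (Fin d.a1) (Fin d.a1) F2 := d.Binf * d.B1 * d.B0
def XinfM : Matrix (Fin d.ainf) (Fin d.ainf) F2 := d.B0 * d.Binf * d.B1

def tau0 : Matrix (Fin d.ainf ⊕ Fin d.a1) (Fin d.ainf ⊕ Fin d.a1) F2 :=
  Matrix.fromBlocks d.A0 d.B0 d.C0 d.D0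
def tau0inv : Matrix (Fin d.ainf ⊕ Fin d.a1) (Fin d.ainf ⊕ Fin d.a1) F2 :=
  Matrix.fromBlocks d.A0 d.B0 d.C0inv d.D0
def tau1 : Matrix (Fin d.a0 ⊕ Fin d.ainf) (Fin d.a0 ⊕ Fin d.ainf) F2 :=
  Matrix.fromBlocks d.A1 d.B1 d.C1 d.D1
def tau1inv : Matrix (Fin d.a0 ⊕ Fin d.ainf) (Fin d.a0 ⊕ Fin d.ainf) F2 :=
  Matrix.fromBlocks d.A1 d.B1 d.C1inv d.D1
def tauinf : Matrix (Fin d.a1 ⊕ Fin d.a0) (Fin d.a1 ⊕ Fin d.a0) F2 :=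
  Matrix.fromBlocks d.Ainf d.Binf d.Cinf d.Dinf
def tauinfinv : Matrix (Fin d.a1 ⊕ Fin d.a0) (Fin d.a1 ⊕ Fin d.a0) F2 :=
  Matrix.fromBlocks d.Ainf d.Binf d.Cinfinv d.Dinf

/-- the map `finf : F^{ainf+a1} → F^{a0+ainf}` -/
def finfM : Matrix (Fin d.a0 ⊕ Fin d.ainf) (Fin d.ainf ⊕ Fin d.a1) F2 :=
  Matrix.fromBlocks 0 0 (1 : Matrix (Fin d.ainf) (Fin d.ainf) F2) 0
/-- the map `f0 : F^{a0+ainf} → F^{a1+a0}` -/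
def f0M : Matrix (Fin d.a1 ⊕ Fin d.a0) (Fin d.a0 ⊕ Fin d.ainf) F2 :=
  Matrix.fromBlocks 0 0 (1 : Matrix (Fin d.a0) (Fin d.a0) F2) 0
/-- the map `f1 : F^{a1+a0} → F^{ainf+a1}` -/
def f1M : Matrix (Fin d.ainf ⊕ Fin d.a1) (Fin d.a1 ⊕ Fin d.a0) F2 :=
  Matrix.fromBlocks 0 0 (1 : Matrix (Fin d.a1) (Fin d.a1) F2) 0

def fbarinfM : Matrix (Fin d.a0 ⊕ Fin d.ainf) (Fin d.ainf ⊕ Fin d.a1) F2 :=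
  d.tau1inv * d.finfM * d.tau0
def fbar0M : Matrix (Fin d.a1 ⊕ Fin d.a0) (Fin d.a0 ⊕ Fin d.ainf) F2 :=
  d.tauinfinv * d.f0M * d.tau1
def fbar1M : Matrix (Fin d.ainf ⊕ Fin d.a1) (Fin d.a1 ⊕ Fin d.a0) F2 :=
  d.tau0inv * d.f1M * d.tauinf

noncomputable def r0 : ℕ := d.B0.rank
noncomputable def r1 : ℕ := d.B1.rank
noncomputable def rinf : ℕ := d.Binf.rank

noncomputable def k0 : ℕ :=
  finrank F2 ↥(LinearMap.ker d.f0M.mulVecLin ⊓ LinearMap.ker d.fbar0M.mulVecLin)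
noncomputable def k1 : ℕ :=
  finrank F2 ↥(LinearMap.ker d.f1M.mulVecLin ⊓ LinearMap.ker d.fbar1M.mulVecLin)
noncomputable def kinf : ℕ :=
  finrank F2 ↥(LinearMap.ker d.finfM.mulVecLin ⊓ LinearMap.ker d.fbarinfM.mulVecLin)

noncomputable def l0 : ℕ :=
  finrank F2 ↥(LinearMap.ker (d.f0M + d.fbar0M).mulVecLin) - d.k0
noncomputable def l1 : ℕ :=
  finrank F2 ↥(LinearMap.ker (d.f1M + d.fbar1M).mulVecLin) - d.k1
noncomputable def linf : ℕ :=
  finrank F2 ↥(LinearMap.ker (d.finfM + d.fbarinfM).mulVecLin) - d.kinf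

noncomputable def c0 : ℕ :=
  finrank F2 ((Fin d.a1 ⊕ Fin d.a0 → F2) ⧸
    (LinearMap.range d.f0M.mulVecLin ⊔ LinearMap.range d.fbar0M.mulVecLin))
noncomputable def c1 : ℕ :=
  finrank F2 ((Fin d.ainf ⊕ Fin d.a1 → F2) ⧸
    (LinearMap.range d.f1M.mulVecLin ⊔ LinearMap.range d.fbar1M.mulVecLin))
noncomputable def cinf : ℕ :=
  finrank F2 ((Fin d.a0 ⊕ Fin d.ainf → F2) ⧸
    (LinearMap.range d.finfM.mulVecLin ⊔ LinearMap.range d.fbarinfM.mulVecLin))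

noncomputable def dd0 : ℕ :=
  finrank F2 ↥(LinearMap.range d.f0M.mulVecLin ⊔ LinearMap.range d.fbar0M.mulVecLin) -
    finrank F2 ↥(LinearMap.range (d.f0M + d.fbar0M).mulVecLin)
noncomputable def dd1 : ℕ :=
  finrank F2 ↥(LinearMap.range d.f1M.mulVecLin ⊔ LinearMap.range d.fbar1M.mulVecLin) -
    finrank F2 ↥(LinearMap.range (d.f1M + d.fbar1M).mulVecLin)
noncomputable def ddinf : ℕ :=
  finrank F2 ↥(LinearMap.range d.finfM.mulVecLin ⊔ LinearMap.range d.fbarinfM.mulVecLin) -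
    finrank F2 ↥(LinearMap.range (d.finfM + d.fbarinfM).mulVecLin)

noncomputable def delta0 : ℕ := d.a0 - d.rinf - d.l0
noncomputable def delta1 : ℕ := d.a1 - d.r0 - d.l1
noncomputable def deltainf : ℕ := d.ainf - d.r1 - d.linf

end SplicingDatum

namespace SplicingDatum

/-- Index type of the source of the splicing map `D`. -/
abbrev Src (e1 e2 : SplicingDatum) : Type :=
  (Fin e1.ainf × Fin e2.ainf) ⊕ (Fin e1.ainf × Fin e2.a0) ⊕ (Fin e1.a1 × Fin e2.a0) ⊕
    (Fin e1.a0 × Fin e2.ainf) ⊕ (Fin e1.a0 × Fin e2.a1) ⊕ (Fin e1.a1 × Fin e2.a1)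

/-- Index type of the target of the splicing map `D`. -/
abbrev Tgt (e1 e2 : SplicingDatum) : Type :=
  (Fin e1.a0 × Fin e2.a0) ⊕ (Fin e1.ainf × Fin e2.a1) ⊕ (Fin e1.ainf × Fin e2.a0) ⊕
    (Fin e1.a1 × Fin e2.ainf) ⊕ (Fin e1.a0 × Fin e2.ainf) ⊕ (Fin e1.a1 × Fin e2.a1)

def row1 (e1 e2 : SplicingDatum) : Matrix (Fin e1.a0 × Fin e2.a0) (Src e1 e2) F2 :=
  Matrix.fromCols ((e1.Dinf * e1.B1) ⊗ₖ (e2.B1 * e2.A0)) <|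
  Matrix.fromCols ((e1.B1 * e1.A0) ⊗ₖ (1 : Matrix (Fin e2.a0) (Fin e2.a0) F2)) <|
  Matrix.fromCols ((e1.B1 * e1.B0) ⊗ₖ (1 : Matrix (Fin e2.a0) (Fin e2.a0) F2)) <|
  Matrix.fromCols ((e1.Dinf * e1.A1) ⊗ₖ (e2.B1 * e2.A0)) <|
  Matrix.fromCols ((1 : Matrix (Fin e1.a0) (Fin e1.a0) F2) ⊗ₖ (e2.B1 * e2.B0)) 0

def row2 (e1 e2 : SplicingDatum) : Matrix (Fin e1.ainf × Fin e2.a1) (Src e1 e2) F2 :=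
  Matrix.fromCols ((1 : Matrix (Fin e1.ainf) (Fin e1.ainf) F2) ⊗ₖ (e2.Binf * e2.B1)) <|
  Matrix.fromCols ((e1.D1 * e1.A0) ⊗ₖ (e2.Binf * e2.A1)) <|
  Matrix.fromCols ((e1.D1 * e1.B0) ⊗ₖ (e2.Binf * e2.A1)) <|
  Matrix.fromCols 0 <|
  Matrix.fromCols ((e1.B0 * e1.Binf) ⊗ₖ (1 : Matrix (Fin e2.a1) (Fin e2.a1) F2))
    ((e1.B0 * e1.Ainf) ⊗ₖ (1 : Matrix (Fin e2.a1) (Fin e2.a1) F2))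

def row3 (e1 e2 : SplicingDatum) : Matrix (Fin e1.ainf × Fin e2.a0) (Src e1 e2) F2 :=
  Matrix.fromCols ((1 : Matrix (Fin e1.ainf) (Fin e1.ainf) F2) ⊗ₖ (e2.Dinf * e2.B1)) <|
  Matrix.fromCols
    ((1 : Matrix (Fin e1.ainf) (Fin e1.ainf) F2) ⊗ₖ (1 : Matrix (Fin e2.a0) (Fin e2.a0) F2) +
      (e1.D1 * e1.A0) ⊗ₖ (e2.Dinf * e2.A1)) <|
  Matrix.fromCols ((e1.D1 * e1.B0) ⊗ₖ (e2.Dinf * e2.A1)) <|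
  Matrix.fromCols 0 <|
  Matrix.fromCols 0 0

def row4 (e1 e2 : SplicingDatum) : Matrix (Fin e1.a1 × Fin e2.ainf) (Src e1 e2) F2 :=
  Matrix.fromCols ((e1.Binf * e1.B1) ⊗ₖ (1 : Matrix (Fin e2.ainf) (Fin e2.ainf) F2)) <|
  Matrix.fromCols 0 <|
  Matrix.fromCols ((1 : Matrix (Fin e1.a1) (Fin e1.a1) F2) ⊗ₖ (e2.B0 * e2.Binf)) <|
  Matrix.fromCols ((e1.Binf * e1.A1) ⊗ₖ (1 : Matrix (Fin e2.ainf) (Fin e2.ainf) F2)) <|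
  Matrix.fromCols
    ((e1.D0 * e1.Binf) ⊗ₖ (e2.B0 * e2.Ainf) + (e1.X1M * e1.Binf) ⊗ₖ (e2.B0 * e2.X1M))
    ((e1.D0 * e1.Ainf) ⊗ₖ (e2.B0 * e2.Ainf) + (e1.X1M * e1.Ainf) ⊗ₖ (e2.B0 * e2.X1M))

def row5 (e1 e2 : SplicingDatum) : Matrix (Fin e1.a0 × Fin e2.ainf) (Src e1 e2) F2 :=
  Matrix.fromCols ((e1.Dinf * e1.B1) ⊗ₖ (e2.D1 * e2.A0)) <|
  Matrix.fromCols 0 <|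
  Matrix.fromCols 0 <|
  Matrix.fromCols
    ((1 : Matrix (Fin e1.a0) (Fin e1.a0) F2) ⊗ₖ (1 : Matrix (Fin e2.ainf) (Fin e2.ainf) F2) +
      (e1.Dinf * e1.A1) ⊗ₖ (e2.D1 * e2.A0)) <|
  Matrix.fromCols ((1 : Matrix (Fin e1.a0) (Fin e1.a0) F2) ⊗ₖ (e2.D1 * e2.B0)) 0

def row6 (e1 e2 : SplicingDatum) : Matrix (Fin e1.a1 × Fin e2.a1) (Src e1 e2) F2 :=
  Matrix.fromCols 0 <|
  Matrix.fromCols 0 <|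
  Matrix.fromCols ((1 : Matrix (Fin e1.a1) (Fin e1.a1) F2) ⊗ₖ (e2.D0 * e2.Binf)) <|
  Matrix.fromCols 0 <|
  Matrix.fromCols
    ((e1.D0 * e1.Binf) ⊗ₖ (e2.D0 * e2.Ainf) + (e1.X1M * e1.Binf) ⊗ₖ (e2.D0 * e2.X1M))
    ((1 : Matrix (Fin e1.a1) (Fin e1.a1) F2) ⊗ₖ (1 : Matrix (Fin e2.a1) (Fin e2.a1) F2) +
      (e1.D0 * e1.Ainf) ⊗ₖ (e2.D0 * e2.Ainf) + (e1.X1M * e1.Ainf) ⊗ₖ (e2.D0 * e2.X1M))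

/-- The splicing map `D = D(K1, K2)` as a `6 × 6` block matrix. -/
def spliceD (e1 e2 : SplicingDatum) : Matrix (Tgt e1 e2) (Src e1 e2) F2 :=
  Matrix.fromRows (row1 e1 e2) <| Matrix.fromRows (row2 e1 e2) <|
  Matrix.fromRows (row3 e1 e2) <| Matrix.fromRows (row4 e1 e2) <|
  Matrix.fromRows (row5 e1 e2) (row6 e1 e2)

end SplicingDatum

/-- A matrix presenting the cokernel, with a right inverse. -/
theorem exists_coker_matrix {m n : ℕ} (M : Matrix (Fin m) (Fin n) F2) :
    ∃ (P : Matrix (Fin (cdim M)) (Fin m) F2) (P' : Matrix (Fin m) (Fin (cdim M)) F2),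
      P * M = 0 ∧ P * P' = 1 := by
  let e : ((Fin m → F2) ⧸ LinearMap.range M.mulVecLin) ≃ₗ[F2] (Fin (cdim M) → F2) :=
    (Module.finBasis F2 _).equivFun
  let f : (Fin m → F2) →ₗ[F2] (Fin (cdim M) → F2) :=
    e.toLinearMap ∘ₗ (LinearMap.range M.mulVecLin).mkQ
  have hf : LinearMap.range f = ⊤ := by
    rw [LinearMap.range_eq_top]
    exact e.surjective.comp (Submodule.mkQ_surjective _)
  obtain ⟨g, hg⟩ := LinearMap.exists_rightInverse_of_surjective f hf
  refine ⟨LinearMap.toMatrix' f, LinearMap.toMatrix' g, ?_, ?_⟩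
  · apply Matrix.toLin'.injective
    rw [Matrix.toLin'_mul, Matrix.toLin'_toMatrix', map_zero]
    apply LinearMap.ext
    intro v
    have h0 : (LinearMap.range M.mulVecLin).mkQ (M.mulVecLin v) = 0 := by
      rw [Submodule.mkQ_apply, Submodule.Quotient.mk_eq_zero]
      exact ⟨v, rfl⟩
    change e ((LinearMap.range M.mulVecLin).mkQ (M.mulVecLin v)) = 0
    rw [h0, map_zero]
  · rw [← LinearMap.toMatrix'_comp, hg, LinearMap.toMatrix'_id]

/-- A matrix with a right inverse annihilating `M` on the left bounds the cokernel below. -/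
theorem card_le_cdim {m n k : Type} [Fintype m] [Fintype n] [Fintype k]
    [DecidableEq m] [DecidableEq n] [DecidableEq k]
    (M : Matrix m n F2) (E : Matrix k m F2) (R : Matrix m k F2)
    (h0 : E * M = 0) (h1 : E * R = 1) : Fintype.card k ≤ cdim M := by
  have hle : LinearMap.range M.mulVecLin ≤ LinearMap.ker E.mulVecLin := by
    rintro _ ⟨v, rfl⟩
    simp [LinearMap.mem_ker, Matrix.mulVec_mulVec, h0]
  let f := (LinearMap.range M.mulVecLin).liftQ E.mulVecLin hle
  have hf : Function.Surjective f := by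
    intro w
    refine ⟨Submodule.Quotient.mk (R.mulVec w), ?_⟩
    change E.mulVec (R.mulVec w) = w
    rw [Matrix.mulVec_mulVec, h1, Matrix.one_mulVec]
  have := LinearMap.finrank_le_finrank_of_surjective hf
  rwa [Module.finrank_fintype_fun_eq_card] at this

theorem exists_right_inv {m n : ℕ} (M : Matrix (Fin m) (Fin n) F2)
    (h : Function.Surjective M.mulVecLin) : ∃ N : Matrix (Fin n) (Fin m) F2, M * N = 1 := by
  obtain ⟨g, hg⟩ := LinearMap.exists_rightInverse_of_surjective M.mulVecLin
    (LinearMap.range_eq_top.2 h)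
  refine ⟨LinearMap.toMatrix' g, ?_⟩
  apply Matrix.toLin'.injective
  rw [Matrix.toLin'_mul, Matrix.toLin'_toMatrix', Matrix.toLin'_one]
  exact hg

theorem exists_left_inv {m n : ℕ} (M : Matrix (Fin m) (Fin n) F2)
    (h : Function.Injective M.mulVecLin) : ∃ N : Matrix (Fin n) (Fin m) F2, N * M = 1 := by
  obtain ⟨g, hg⟩ := LinearMap.exists_leftInverse_of_injective M.mulVecLin
    (LinearMap.ker_eq_bot.2 h)
  refine ⟨LinearMap.toMatrix' g, ?_⟩
  apply Matrix.toLin'.injective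
  rw [Matrix.toLin'_mul, Matrix.toLin'_toMatrix', Matrix.toLin'_one]
  exact hg

theorem mat_add_self {m n : Type*} (M : Matrix m n F2) : M + M = 0 := by
  ext i j
  exact CharTwo.add_self_eq_zero _

theorem mat_add_self_left {m n : Type*} (M N : Matrix m n F2) : M + (M + N) = N := by
  rw [← add_assoc, mat_add_self, zero_add]

theorem mat_add_swap {m n : Type*} (M N : Matrix m n F2) : M + (N + (M + N)) = 0 := by
  rw [← add_assoc, mat_add_self]

theorem mat_eq_of_add {m n : Type*} {M N : Matrix m n F2} (h : M + N = 0) : M = N := by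
  calc M = M + (N + N) := by rw [mat_add_self, add_zero]
    _ = N := by rw [← add_assoc, h, zero_add]

/-- reassociation of a product identity -/
theorem reassoc2 {m n p q : ℕ} {n' : ℕ} {A : Matrix (Fin m) (Fin n) F2}
    {B : Matrix (Fin n) (Fin p) F2}
    {C : Matrix (Fin m) (Fin n') F2} {D : Matrix (Fin n') (Fin p) F2} (h : A * B = C * D)
    (M : Matrix (Fin p) (Fin q) F2) : A * (B * M) = C * (D * M) := by
  rw [← Matrix.mul_assoc, h, Matrix.mul_assoc]

namespace SplicingDatum

theorem cond0 (d : SplicingDatum) : d.A0 * d.B0 = d.B0 * d.D0 := mat_eq_of_add d.comm0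
theorem condinf (d : SplicingDatum) : d.Ainf * d.Binf = d.Binf * d.Dinf :=
  mat_eq_of_add d.comminf

theorem sqA0 (d : SplicingDatum) : d.A0 * d.A0 + d.B0 * d.C0 = 1 := by
  have h := d.inv0_right
  rw [Matrix.fromBlocks_multiply, ← Matrix.fromBlocks_one, Matrix.fromBlocks_inj] at h
  exact h.1

theorem sqAinf (d : SplicingDatum) : d.Ainf * d.Ainf + d.Binf * d.Cinf = 1 := by
  have h := d.invinf_right
  rw [Matrix.fromBlocks_multiply, ← Matrix.fromBlocks_one, Matrix.fromBlocks_inj] at h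
  exact h.1

theorem coker_bound (e1 e2 : SplicingDatum)
    (hB0 : Function.Injective e2.B0.mulVecLin)
    (hBinf : Function.Surjective e2.Binf.mulVecLin)
    (hsurj : Function.Surjective (e2.Binf * e2.B1).mulVecLin) :
    cdim (spliceD e1 e2) ≥ cdim (e1.X1M * e1.Binf) * cdim e2.X1M := by
  obtain ⟨Z, hZ⟩ := exists_left_inv _ hB0
  obtain ⟨B', hB'⟩ := exists_right_inv _ hBinf
  obtain ⟨Y', hY'⟩ := exists_right_inv _ hsurj
  obtain ⟨P, P', hP, hPP⟩ := exists_coker_matrix (e1.X1M * e1.Binf)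
  obtain ⟨Q, Q', hQ, hQQ⟩ := exists_coker_matrix e2.X1M
  generalize cdim (e1.X1M * e1.Binf) = k at *
  generalize cdim e2.X1M = l at *
  unfold X1M at hP hQ
  simp only [Matrix.mul_assoc] at hP hQ hY'
  have hP' : ∀ {q : ℕ} (M : Matrix (Fin e1.a0) (Fin q) F2),
      P * (e1.Binf * (e1.B1 * (e1.B0 * (e1.Binf * M)))) = 0 := by
    intro q M
    have := congrArg (· * M) hP
    simpa only [Matrix.mul_assoc, Matrix.zero_mul] using this
  have hQ' : ∀ {q : ℕ} (M : Matrix (Fin e2.a1) (Fin q) F2),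
      Q * (e2.Binf * (e2.B1 * (e2.B0 * M))) = 0 := by
    intro q M
    have := congrArg (· * M) hQ
    simpa only [Matrix.mul_assoc, Matrix.zero_mul] using this
  have hZ' : ∀ {q : ℕ} (M : Matrix (Fin e2.a1) (Fin q) F2), Z * (e2.B0 * M) = M := by
    intro q M
    rw [← Matrix.mul_assoc, hZ, Matrix.one_mul]
  have hB'' : ∀ {q : ℕ} (M : Matrix (Fin e2.a1) (Fin q) F2), e2.Binf * (B' * M) = M := by
    intro q M
    rw [← Matrix.mul_assoc, hB', Matrix.one_mul]
  have hY'' : ∀ {q : ℕ} (M : Matrix (Fin e2.a1) (Fin q) F2),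
      e2.Binf * (e2.B1 * (Y' * M)) = M := by
    intro q M
    have := congrArg (· * M) hY'
    simpa only [Matrix.mul_assoc, Matrix.one_mul] using this
  have c1 := e1.cond0
  have c2 := e1.condinf
  have c3 := e2.cond0
  have c4 := e2.condinf
  have c1' {q : ℕ} := reassoc2 (q := q) c1
  have c2' {q : ℕ} := reassoc2 (q := q) c2
  have c3' {q : ℕ} := reassoc2 (q := q) c3
  have c4' {q : ℕ} := reassoc2 (q := q) c4
  let E1 : Matrix (Fin k × Fin l) (Fin e1.a0 × Fin e2.a0) F2 := (P * e1.Binf) ⊗ₖ (Q * e2.Binf)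
  let E2 : Matrix (Fin k × Fin l) (Fin e1.ainf × Fin e2.a1) F2 :=
    (P * (e1.Binf * (e1.B1 * e1.A0))) ⊗ₖ (Q * e2.Ainf)
  let E3 : Matrix (Fin k × Fin l) (Fin e1.ainf × Fin e2.a0) F2 :=
    (P * (e1.Binf * (e1.B1 * e1.A0))) ⊗ₖ (Q * e2.Binf)
  let E4 : Matrix (Fin k × Fin l) (Fin e1.a1 × Fin e2.ainf) F2 :=
    (P * e1.Ainf) ⊗ₖ (Q * (e2.Binf * (e2.B1 * e2.A0))) +
      (P * (e1.Binf * (e1.B1 * e1.B0))) ⊗ₖ (Q * Z)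
  let E : Matrix (Fin k × Fin l) (Tgt e1 e2) F2 :=
    Matrix.fromCols E1 <| Matrix.fromCols E2 <| Matrix.fromCols E3 <| Matrix.fromCols E4 <|
      Matrix.fromCols 0 0
  let R1 : Matrix (Fin e1.a0 × Fin e2.a0) (Fin k × Fin l) F2 :=
    (e1.Cinf * P') ⊗ₖ (B' * Q') +
      (e1.B1 * (e1.B0 * (e1.Ainf * P'))) ⊗ₖ (B' * (Z * (e2.A0 * (Y' * Q'))))
  let R4 : Matrix (Fin e1.a1 × Fin e2.ainf) (Fin k × Fin l) F2 :=
    (e1.Ainf * P') ⊗ₖ (e2.A0 * (Y' * Q'))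
  let R : Matrix (Tgt e1 e2) (Fin k × Fin l) F2 :=
    Matrix.fromRows R1 <| Matrix.fromRows 0 <| Matrix.fromRows 0 <| Matrix.fromRows R4 <|
      Matrix.fromRows 0 0
  have key := card_le_cdim (spliceD e1 e2) E R ?_ ?_
  · simpa using key
  · simp only [E, spliceD, row1, row2, row3, row4, row5, row6, Matrix.fromCols_mul_fromRows,
      Matrix.mul_fromCols]
    have fc0 : ∀ {m n p : Type} , Matrix.fromCols (0 : Matrix m n F2) (0 : Matrix m p F2) = 0 :=
      fun {m n p} => Matrix.fromCols_zero
    have fca : ∀ {m n p : Type} (A A' : Matrix m n F2) (C C' : Matrix m p F2),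
        Matrix.fromCols A C + Matrix.fromCols A' C' = Matrix.fromCols (A + A') (C + C') := by
      intro m n p A A' C C'
      ext i (j | j) <;> rfl
    simp only [fca]
    simp only [E1, E2, E3, E4, X1M, Matrix.mul_add, Matrix.add_mul, ← Matrix.mul_kronecker_mul,
      Matrix.mul_assoc, Matrix.mul_zero, Matrix.zero_mul, Matrix.mul_one, Matrix.one_mul,
      c1, c2, c3, c4, c1', c2', c3', c4', hP, hQ, hP', hQ', hZ, hZ', add_zero, zero_add,
      Matrix.kronecker_zero, Matrix.zero_kronecker, add_assoc, mat_add_self, mat_add_self_left,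
      mat_add_swap, fc0]
  · have sA := e1.sqAinf
    have sQ : ∀ {q : ℕ} (M : Matrix (Fin e2.ainf) (Fin q) F2),
        Q * (e2.Binf * (e2.B1 * (e2.A0 * (e2.A0 * M)))) = Q * (e2.Binf * (e2.B1 * M)) := by
      intro q M
      have h := congrArg (fun T => Q * (e2.Binf * (e2.B1 * (T * M)))) e2.sqA0
      simpa only [Matrix.mul_assoc, Matrix.add_mul, Matrix.mul_add, hQ', add_zero,
        Matrix.one_mul] using h
    have sP : P * (e1.Ainf * (e1.Ainf * P')) + P * (e1.Binf * (e1.Cinf * P')) = 1 := by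
      have h := congrArg (fun T => P * (T * P')) sA
      simpa only [Matrix.mul_assoc, Matrix.add_mul, Matrix.mul_add, hPP,
        Matrix.one_mul] using h
    simp only [E, R, Matrix.fromCols_mul_fromRows]
    simp only [E1, E4, R1, R4, Matrix.mul_add, Matrix.add_mul, ← Matrix.mul_kronecker_mul,
      Matrix.mul_assoc, Matrix.mul_zero, Matrix.zero_mul, hB'', hY'', hQQ, sQ, add_zero, zero_add]
    rw [← Matrix.one_kronecker_one, ← sP, Matrix.add_kronecker]
    generalize (P * (e1.Binf * (e1.Cinf * P'))) ⊗ₖ (1 : Matrix (Fin l) (Fin l) F2) = U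
    generalize (P * (e1.Ainf * (e1.Ainf * P'))) ⊗ₖ (1 : Matrix (Fin l) (Fin l) F2) = V
    generalize (P * (e1.Binf * (e1.B1 * (e1.B0 * (e1.Ainf * P'))))) ⊗ₖ
      (Q * (Z * (e2.A0 * (Y' * Q')))) = W
    calc U + W + (V + W) = V + U + (W + W) := by abel
      _ = V + U := by rw [mat_add_self, add_zero]

theorem kdim_X1_eq_zero (d : SplicingDatum)
    (hr1 : d.B1.rank = d.a1)
    (hsurj : Function.Surjective (d.Binf * d.B1).mulVecLin)
    (hinj : Function.Injective (d.B1 * d.B0).mulVecLin) : kdim d.X1M = 0 := by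
  -- the restriction of `Binf` to the range of `B1` is onto a space of the same dimension
  let f : LinearMap.range d.B1.mulVecLin →ₗ[F2] (Fin d.a1 → F2) :=
    d.Binf.mulVecLin ∘ₗ (LinearMap.range d.B1.mulVecLin).subtype
  have hfs : Function.Surjective f := by
    intro w
    obtain ⟨v, hv⟩ := hsurj w
    refine ⟨⟨d.B1.mulVecLin v, v, rfl⟩, ?_⟩
    rw [← hv]
    simp [f, Matrix.mulVec_mulVec]
  have hdim : finrank F2 (LinearMap.range d.B1.mulVecLin) = finrank F2 (Fin d.a1 → F2) := by
    rw [Module.finrank_fintype_fun_eq_card, Fintype.card_fin]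
    exact hr1
  have hfi : Function.Injective f :=
    (LinearMap.injective_iff_surjective_of_finrank_eq_finrank hdim).2 hfs
  unfold kdim
  have : LinearMap.ker d.X1M.mulVecLin = ⊥ := by
    rw [LinearMap.ker_eq_bot]
    intro x y hxy
    apply hinj
    have hx : ∀ x : Fin d.a1 → F2, (d.B1 * d.B0).mulVecLin x ∈ LinearMap.range d.B1.mulVecLin :=
      fun x => ⟨d.B0.mulVecLin x, by simp [Matrix.mulVec_mulVec]⟩
    have h : f ⟨_, hx x⟩ = f ⟨_, hx y⟩ := by
      simpa [f, X1M, Matrix.mulVec_mulVec, Matrix.mul_assoc] using hxy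
    exact congrArg Subtype.val (hfi h)
  rw [this, finrank_bot]

end SplicingDatum

open SplicingDatum in
/-- lower bounds for `coker D` (and `ker D`) in the case
`r1² = a1²`, `a0² = a1² + 1 `, `a1² < ainf²`. -/
theorem stmt13 (e1 e2 : SplicingDatum)
    (hB0 : Function.Injective e2.B0.mulVecLin)
    (hBinf : Function.Surjective e2.Binf.mulVecLin)
    (hr1 : e2.B1.rank = e2.a1)
    (ha0 : e2.a0 = e2.a1 + 1)
    (ha1 : e2.a1 < e2.ainf)
    (hsurj : Function.Surjective (e2.Binf * e2.B1).mulVecLin) :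
    cdim (spliceD e1 e2) ≥ cdim (e1.X1M * e1.Binf) * cdim e2.X1M ∧
    (Function.Injective (e2.B1 * e2.B0).mulVecLin →
      kdim (spliceD e1 e2) ≥ kdim (e1.B0 * e1.X1M) * kdim e2.X1M) := by
  refine ⟨coker_bound e1 e2 hB0 hBinf hsurj, fun hinj => ?_⟩
  rw [kdim_X1_eq_zero e2 hr1 hsurj hinj, Nat.mul_zero]
  exact Nat.zero_le _
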